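/- Policy improvement comparison: let S be a nonempty finite type, let Q, Q' : Matrix S S ℝ be row-stochastic matrices, let γ ∈ ℝ with 0 ≤ γ < 1, and let R : S → ℝ. Set V = (I − γ·Q)⁻¹ *ᵥ R and V' = (I − γ·Q')⁻¹ *ᵥ R. If R + γ·(Q' *ᵥ V) ≥ V componentwise (equivalently, γ·(Q' *ᵥ V)(s) ≥ γ·(Q *ᵥ V)(s) for every s), then V'(s) ≥ V(s) for every s ∈ S. -/

import Mathlib

open Matrix BigOperators

/-- A matrix is row-stochastic if all entries are nonnegative and every row sums to 1. -/
def RowStochastic {S : Type*} [Fintype S] (P : Matrix S S ℝ) : Prop :=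
  (∀ i j, 0 ≤ P i j) ∧ (∀ i, ∑ j, P i j = 1)

/-!
A nonnegative matrix `A` with row sums below `1` satisfies a maximum principle: if `x ≤ A *ᵥ x`,
then at a maximum `m` of `x` one gets `x m ≤ (∑ j, A m j) * x m`, which is impossible when
`0 < x m`. Hence `1 - A` reflects the order; in particular it is invertible, and
`(1 - A) *ᵥ V ≤ R` gives `V ≤ (1 - A)⁻¹ *ᵥ R`. For `A = γ • Q'` the hypothesis on `V` is exactly
`(1 - A) *ᵥ V ≤ R`.
-/

section MaximumPrinciple

variable {S K : Type*} [Fintype S] [LinearOrder K]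

theorem nonpos_of_le_mulVec [Semiring K] [IsStrictOrderedRing K] {A : Matrix S S K}
    (hA : ∀ i j, 0 ≤ A i j) (hsum : ∀ i, ∑ j, A i j < 1) {x : S → K} (hx : x ≤ A *ᵥ x) :
    x ≤ 0 := by
  intro s
  have : Nonempty S := ⟨s⟩
  obtain ⟨m, hm⟩ := Finite.exists_max x
  suffices x m ≤ 0 from (hm s).trans this
  by_contra! hpos
  have : x m < x m := calc
    x m ≤ ∑ j, A m j * x j := hx m
    _ ≤ ∑ j, A m j * x m :=
      Finset.sum_le_sum fun j _ ↦ mul_le_mul_of_nonneg_left (hm j) (hA m j)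
    _ = (∑ j, A m j) * x m := (Finset.sum_mul ..).symm
    _ < x m := mul_lt_of_lt_one_left hpos (hsum m)
  exact this.false

theorem le_of_one_sub_mulVec_le [DecidableEq S] [Ring K] [IsStrictOrderedRing K]
    {A : Matrix S S K} (hA : ∀ i j, 0 ≤ A i j) (hsum : ∀ i, ∑ j, A i j < 1) {x y : S → K}
    (h : (1 - A) *ᵥ x ≤ (1 - A) *ᵥ y) : x ≤ y := by
  rw [← sub_nonpos]
  apply nonpos_of_le_mulVec hA hsum
  rwa [← sub_nonpos, ← mulVec_sub, sub_mulVec, one_mulVec, sub_nonpos] at h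

variable [DecidableEq S] [Field K] [IsStrictOrderedRing K] {A : Matrix S S K}

theorem isUnit_one_sub_of_sum_row_lt_one (hA : ∀ i j, 0 ≤ A i j) (hsum : ∀ i, ∑ j, A i j < 1) :
    IsUnit (1 - A) :=
  mulVec_injective_iff_isUnit.mp fun _ _ h ↦
    (le_of_one_sub_mulVec_le hA hsum h.le).antisymm (le_of_one_sub_mulVec_le hA hsum h.ge)

theorem policy_improvement_general (hA : ∀ i j, 0 ≤ A i j) (hsum : ∀ i, ∑ j, A i j < 1)
    {R V : S → K} (h : V ≤ R + A *ᵥ V) : V ≤ (1 - A)⁻¹ *ᵥ R := by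
  have hdet : IsUnit (1 - A).det :=
    (isUnit_iff_isUnit_det _).mp (isUnit_one_sub_of_sum_row_lt_one hA hsum)
  apply le_of_one_sub_mulVec_le hA hsum
  calc
    (1 - A) *ᵥ V = V - A *ᵥ V := by rw [sub_mulVec, one_mulVec]
    _ ≤ R := sub_le_iff_le_add.mpr h
    _ = (1 - A) *ᵥ ((1 - A)⁻¹ *ᵥ R) := by rw [mulVec_mulVec, mul_nonsing_inv _ hdet, one_mulVec]

end MaximumPrinciple

namespace RowStochastic

variable {S : Type*} [Fintype S] {P : Matrix S S ℝ} {γ : ℝ}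

theorem smul_apply_nonneg (hP : RowStochastic P) (hγ : 0 ≤ γ) (i j : S) : 0 ≤ (γ • P) i j :=
  mul_nonneg hγ (hP.1 i j)

theorem sum_smul_apply_lt_one (hP : RowStochastic P) (hγ : γ < 1) (i : S) :
    ∑ j, (γ • P) i j < 1 := by
  simpa only [Matrix.smul_apply, smul_eq_mul, ← Finset.mul_sum, hP.2 i, mul_one] using hγ

end RowStochastic

/-- Policy improvement comparison. -/
theorem policy_improvement {S : Type*} [Fintype S] [DecidableEq S] [Nonempty S]
    (Q Q' : Matrix S S ℝ) (hQ : RowStochastic Q) (hQ' : RowStochastic Q')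
    (γ : ℝ) (hγ0 : 0 ≤ γ) (hγ1 : γ < 1) (R : S → ℝ)
    (V V' : S → ℝ) (hV : V = (1 - γ • Q)⁻¹ *ᵥ R) (hV' : V' = (1 - γ • Q')⁻¹ *ᵥ R)
    (h : ∀ s, V s ≤ (R + γ • (Q' *ᵥ V)) s) :
    ∀ s, V s ≤ V' s := by
  rw [← smul_mulVec] at h
  exact hV' ▸ policy_improvement_general (hQ'.smul_apply_nonneg hγ0)
    (hQ'.sum_smul_apply_lt_one hγ1) h
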